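/- Inclusion of spaces: let (κ, k) ∈ L₁. Then C_{-1,(κ)}(0,∞) ⊆ C¹_{-1,(k)}(0,∞); that is, if f = κ * φ with φ ∈ C_{-1}(0,∞), then k * f is differentiable on (0,∞), has a finite limit at t = 0+, and d/dt (k * f) belongs to C_{-1}(0,∞). -/

import Mathlib

open Real Filter MeasureTheory intervalIntegral

/-- The Laplace convolution `(f * g)(t) = ∫_0^t f(t-τ) g(τ) dτ`. -/
noncomputable def lconv (f g : ℝ → ℝ) : ℝ → ℝ :=
  fun t => ∫ τ in (0:ℝ)..t, f (t - τ) * g τ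

/-- The space `C_{-1}(0,∞)`: functions representable as `t^p f₁(t)` with `p > -1`
and `f₁` continuous on `[0,∞)`. -/
def CMinusOne (f : ℝ → ℝ) : Prop :=
  ∃ p : ℝ, p > -1 ∧ ∃ f₁ : ℝ → ℝ, ContinuousOn f₁ (Set.Ici 0) ∧
    ∀ t > (0:ℝ), f t = t ^ p * f₁ t


/-- The class `L₁` of Sonin kernel pairs: `κ, k ∈ C_{-1}(0,∞)` with `(κ * k)(t) = 1`
for all `t > 0`. -/
def SoninPair (κ k : ℝ → ℝ) : Prop :=
  CMinusOne κ ∧ CMinusOne k ∧ ∀ t > (0:ℝ), lconv κ k t = 1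


theorem CMinusOne.rep {f : ℝ → ℝ} (hf : CMinusOne f) :
    ∃ p : ℝ, p > -1 ∧ ∃ F : ℝ → ℝ, Continuous F ∧ ∀ t > (0:ℝ), f t = t ^ p * F t := by
  obtain ⟨p, hp, f₁, hc, h⟩ := hf
  refine ⟨p, hp, fun t => f₁ (max t 0), ?_, fun t ht => ?_⟩
  · exact hc.comp_continuous (by fun_prop) (fun t => le_max_right t 0)
  · simp only [max_eq_left ht.le, h t ht]

theorem CMinusOne.congr {f g : ℝ → ℝ} (hf : CMinusOne f) (h : ∀ t > (0:ℝ), g t = f t) :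
    CMinusOne g := by
  obtain ⟨p, hp, f₁, hc, h'⟩ := hf
  exact ⟨p, hp, f₁, hc, fun t ht => by rw [h t ht, h' t ht]⟩

theorem CMinusOne.nrm {f : ℝ → ℝ} (hf : CMinusOne f) : CMinusOne (fun t => ‖f t‖) := by
  obtain ⟨p, hp, f₁, hc, h'⟩ := hf
  refine ⟨p, hp, fun t => ‖f₁ t‖, hc.norm, fun t ht => ?_⟩
  simp only [h' t ht, norm_mul, Real.norm_of_nonneg (Real.rpow_nonneg ht.le p)]

theorem CMinusOne.contOn {f : ℝ → ℝ} (hf : CMinusOne f) : ContinuousOn f (Set.Ioi 0) := by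
  obtain ⟨p, hp, F, hc, h⟩ := hf.rep
  have : ContinuousOn (fun t : ℝ => t ^ p * F t) (Set.Ioi 0) := by
    refine ContinuousOn.mul (fun t ht => ?_) hc.continuousOn
    exact (Real.continuousAt_rpow_const t p (Or.inl (ne_of_gt ht))).continuousWithinAt
  exact this.congr (fun t ht => h t ht)

theorem CMinusOne.intble {f : ℝ → ℝ} (hf : CMinusOne f) {t : ℝ} (ht : 0 < t) :
    IntervalIntegrable f volume 0 t := by
  obtain ⟨p, hp, F, hc, h⟩ := hf.rep
  have h1 : IntervalIntegrable (fun t : ℝ => t ^ p * F t) volume 0 t :=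
    (intervalIntegral.intervalIntegrable_rpow' hp).mul_continuousOn hc.continuousOn
  refine h1.congr fun s hs => ?_
  rw [Set.uIoc_of_le ht.le] at hs
  exact (h s hs.1).symm

theorem beta_intble {p q : ℝ} (hp : p > -1) (hq : q > -1) :
    IntervalIntegrable (fun s : ℝ => (1 - s) ^ p * s ^ q) volume 0 1 := by
  have h := (Complex.betaIntegral_convergent (u := ((q + 1 : ℝ) : ℂ)) (v := ((p + 1 : ℝ) : ℂ))
    (by simp; linarith) (by simp; linarith)).norm
  rw [intervalIntegrable_iff_integrableOn_Ioo_of_le zero_le_one] at h ⊢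
  refine h.congr_fun (fun s hs => ?_) measurableSet_Ioo
  have e : (1 - (s:ℂ)) = ((1 - s : ℝ) : ℂ) := by simp
  simp only [norm_mul]
  rw [e, Complex.norm_cpow_eq_rpow_re_of_pos hs.1,
    Complex.norm_cpow_eq_rpow_re_of_pos (sub_pos.2 hs.2)]
  simp [mul_comm]

theorem scaled {f g F G : ℝ → ℝ} {p q : ℝ}
    (hf : ∀ t > (0:ℝ), f t = t ^ p * F t) (hg : ∀ t > (0:ℝ), g t = t ^ q * G t)
    {t : ℝ} (ht : 0 < t) {s : ℝ} (hs : s ∈ Set.Ioo (0:ℝ) 1) :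
    f (t - t * s) * g (t * s) =
      t ^ (p + q) * (((1 - s) ^ p * s ^ q) * (F (t * (1 - s)) * G (t * s))) := by
  have e : t - t * s = t * (1 - s) := by ring
  have h1 : 0 < 1 - s := sub_pos.2 hs.2
  rw [e, hf _ (mul_pos ht h1), hg _ (mul_pos ht hs.1), Real.mul_rpow ht.le h1.le,
    Real.mul_rpow ht.le hs.1.le, Real.rpow_add ht]
  ring

theorem conv_intble {f g : ℝ → ℝ} (hf : CMinusOne f) (hg : CMinusOne g) {t : ℝ} (ht : 0 < t) :
    IntervalIntegrable (fun τ => f (t - τ) * g τ) volume 0 t := by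
  obtain ⟨p, hp, F, hF, hfF⟩ := hf.rep
  obtain ⟨q, hq, G, hG, hgG⟩ := hg.rep
  rw [← IntervalIntegrable.comp_mul_left_iff ht.ne', zero_div, div_self ht.ne']
  have h1 : IntervalIntegrable (fun s : ℝ => t ^ (p + q) *
      (((1 - s) ^ p * s ^ q) * (F (t * (1 - s)) * G (t * s)))) volume 0 1 := by
    refine IntervalIntegrable.const_mul ((beta_intble hp hq).mul_continuousOn ?_) _
    exact Continuous.continuousOn (by fun_prop)
  rw [intervalIntegrable_iff_integrableOn_Ioo_of_le zero_le_one] at h1 ⊢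
  exact h1.congr_fun (fun s hs => (scaled hfF hgG ht hs).symm) measurableSet_Ioo

theorem lconv_mem {f g : ℝ → ℝ} (hf : CMinusOne f) (hg : CMinusOne g) :
    CMinusOne (lconv f g) := by
  obtain ⟨p, hp, F, hF, hfF⟩ := hf.rep
  obtain ⟨q, hq, G, hG, hgG⟩ := hg.rep
  refine ⟨p + q + 1, by linarith, fun t => ∫ s in (0:ℝ)..1,
    ((1 - s) ^ p * s ^ q) * (F (t * (1 - s)) * G (t * s)), ?_, fun t ht => ?_⟩
  · refine Continuous.continuousOn (continuous_iff_continuousAt.2 fun t₀ => ?_)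
    have hb := beta_intble hp hq
    have hH : Continuous (fun x : ℝ × ℝ => F (x.1 * (1 - x.2)) * G (x.1 * x.2)) := by fun_prop
    obtain ⟨C, hC⟩ := ((isCompact_Icc (a := t₀ - 1) (b := t₀ + 1)).prod
      (isCompact_Icc (a := (0:ℝ)) (b := 1))).exists_bound_of_continuousOn hH.continuousOn
    refine intervalIntegral.continuousAt_of_dominated_interval
      (bound := fun s => ‖(1 - s) ^ p * s ^ q‖ * C) ?_ ?_ (hb.norm.mul_const C) ?_
    · refine Eventually.of_forall fun t => ?_
      refine AEStronglyMeasurable.mul (intervalIntegrable_iff.1 hb).aestronglyMeasurable ?_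
      exact Continuous.aestronglyMeasurable (by fun_prop)
    · filter_upwards [Icc_mem_nhds (show t₀ - 1 < t₀ by linarith) (show t₀ < t₀ + 1 by linarith)]
        with t ht
      refine Eventually.of_forall fun s hs => ?_
      rw [Set.uIoc_of_le zero_le_one] at hs
      rw [norm_mul]
      exact mul_le_mul_of_nonneg_left (hC (t, s) ⟨ht, hs.1.le, hs.2⟩) (norm_nonneg _)
    · refine Eventually.of_forall fun s _ => Continuous.continuousAt (by fun_prop)
  · have h := intervalIntegral.smul_integral_comp_mul_left (a := 0) (b := 1)
      (fun τ => f (t - τ) * g τ) t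
    rw [mul_zero, mul_one] at h
    rw [lconv, ← h, smul_eq_mul]
    have h2 : ∫ s in (0:ℝ)..1, f (t - t * s) * g (t * s) = ∫ s in (0:ℝ)..1, t ^ (p + q) *
      (((1 - s) ^ p * s ^ q) * (F (t * (1 - s)) * G (t * s))) := by
      rw [intervalIntegral.integral_of_le zero_le_one, intervalIntegral.integral_of_le zero_le_one,
        integral_Ioc_eq_integral_Ioo, integral_Ioc_eq_integral_Ioo]
      exact setIntegral_congr_fun measurableSet_Ioo (fun s hs => scaled hfF hgG ht hs)
    rw [h2, intervalIntegral.integral_const_mul, Real.rpow_add ht (p + q) 1, Real.rpow_one]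
    ring

/-- Extension by zero. -/
noncomputable def ext0 (f : ℝ → ℝ) : ℝ → ℝ := (Set.Ioi (0:ℝ)).indicator f

theorem ext0_meas {f : ℝ → ℝ} (hf : CMinusOne f) : AEStronglyMeasurable (ext0 f) volume :=
  (aestronglyMeasurable_indicator_iff measurableSet_Ioi).2
    (hf.contOn.aestronglyMeasurable measurableSet_Ioi)

theorem ext0_norm (f : ℝ → ℝ) : (fun t => ‖ext0 f t‖) = ext0 (fun t => ‖f t‖) := by
  ext t
  exact norm_indicator_eq_indicator_norm f t

theorem ext0_integrand (f g : ℝ → ℝ) (y : ℝ) :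
    (fun τ => (ContinuousLinearMap.mul ℝ ℝ) (ext0 g τ) (ext0 f (y - τ))) =
      (Set.Ioo 0 y).indicator (fun τ => f (y - τ) * g τ) := by
  ext τ
  simp only [ContinuousLinearMap.mul_apply', ext0, Set.indicator, Set.mem_Ioi, Set.mem_Ioo, sub_pos]
  split_ifs <;> first | (exfalso; tauto) | ring

theorem ext0_exists {f g : ℝ → ℝ} (hf : CMinusOne f) (hg : CMinusOne g) (y : ℝ) :
    ConvolutionExistsAt (ext0 g) (ext0 f) y (ContinuousLinearMap.mul ℝ ℝ) volume := by
  unfold ConvolutionExistsAt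
  rw [ext0_integrand, integrable_indicator_iff measurableSet_Ioo]
  rcases le_or_gt y 0 with hy | hy
  · simp [Set.Ioo_eq_empty_of_le hy]
  · exact (intervalIntegrable_iff_integrableOn_Ioo_of_le hy.le).1 (conv_intble hf hg hy)

theorem ext0_conv (f g : ℝ → ℝ) :
    convolution (ext0 g) (ext0 f) (ContinuousLinearMap.mul ℝ ℝ) volume = ext0 (lconv f g) := by
  ext y
  unfold convolution
  rw [ext0_integrand, MeasureTheory.integral_indicator measurableSet_Ioo]
  rcases le_or_gt y 0 with hy | hy
  · simp [Set.Ioo_eq_empty_of_le hy, ext0, hy]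
  · simp only [ext0, Set.indicator, Set.mem_Ioi, hy, if_true, lconv]
    rw [intervalIntegral.integral_of_le hy.le, integral_Ioc_eq_integral_Ioo]

theorem lconv_assoc {a b c : ℝ → ℝ} (ha : CMinusOne a) (hb : CMinusOne b) (hc : CMinusOne c)
    {t : ℝ} (ht : 0 < t) : lconv a (lconv b c) t = lconv (lconv a b) c t := by
  have h := convolution_assoc (μ := volume) (ν := volume) (f := ext0 c) (g := ext0 b) (k := ext0 a)
    (ContinuousLinearMap.mul ℝ ℝ) (ContinuousLinearMap.mul ℝ ℝ)
    (ContinuousLinearMap.mul ℝ ℝ) (ContinuousLinearMap.mul ℝ ℝ)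
    (fun x y z => by simp [mul_assoc]) (x₀ := t) (ext0_meas hc) (ext0_meas hb) (ext0_meas ha)
    (Eventually.of_forall fun y => ext0_exists hb hc y)
    (Eventually.of_forall fun y => by
      rw [ext0_norm, ext0_norm]; exact ext0_exists ha.nrm hb.nrm y)
    (by rw [ext0_norm, ext0_norm, ext0_norm, ext0_conv]
        exact ext0_exists (lconv_mem ha.nrm hb.nrm) hc.nrm t)
  rw [ext0_conv, ext0_conv, ext0_conv, ext0_conv] at h
  simpa [ext0, Set.indicator, ht] using h

theorem lconv_comm (a b : ℝ → ℝ) (t : ℝ) : lconv a b t = lconv b a t := by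
  unfold lconv
  have h := intervalIntegral.integral_comp_sub_left (a := 0) (b := t)
    (fun τ => a (t - τ) * b τ) t
  rw [sub_self, sub_zero] at h
  rw [← h]
  simp [mul_comm]

theorem lconv_congr {a b c d : ℝ → ℝ} (h : ∀ t > (0:ℝ), a t = c t) (h' : ∀ t > (0:ℝ), b t = d t)
    {t : ℝ} (ht : 0 < t) : lconv a b t = lconv c d t := by
  unfold lconv
  rw [intervalIntegral.integral_of_le ht.le, intervalIntegral.integral_of_le ht.le,
    integral_Ioc_eq_integral_Ioo, integral_Ioc_eq_integral_Ioo]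
  refine setIntegral_congr_fun measurableSet_Ioo (fun s hs => ?_)
  simp only [h _ (sub_pos.2 hs.2), h' _ hs.1]

/-- Inclusion of spaces: for `(κ, k) ∈ L₁`, `C_{-1,(κ)}(0,∞) ⊆ C¹_{-1,(k)}(0,∞)`;
i.e. if `f = κ * φ` with `φ ∈ C_{-1}(0,∞)`, then `f ∈ C_{-1}(0,∞)`, `k * f` is
differentiable on `(0,∞)`, has a finite limit at `0+`, and `d/dt (k * f)` belongs
to `C_{-1}(0,∞)`. -/
theorem CMinusOne_kappa_subset_C1_k (κ k f φ : ℝ → ℝ) (hκk : SoninPair κ k)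
    (hφ : CMinusOne φ) (hfφ : ∀ t > (0:ℝ), f t = lconv κ φ t) :
    CMinusOne f ∧ (∀ t > (0:ℝ), DifferentiableAt ℝ (lconv k f) t) ∧
      (∃ c : ℝ, Tendsto (lconv k f) (nhdsWithin 0 (Set.Ioi 0)) (nhds c)) ∧
      CMinusOne (deriv (lconv k f)) := by
  obtain ⟨hκ, hk, hs⟩ := hκk
  have hf : CMinusOne f := (lconv_mem hκ hφ).congr hfφ
  have key : ∀ t > (0:ℝ), lconv k f t = ∫ τ in (0:ℝ)..t, φ τ := by
    intro t ht
    rw [lconv_congr (fun _ _ => rfl) hfφ ht, lconv_assoc hk hκ hφ ht,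
      lconv_congr (c := fun _ => 1) (d := φ)
        (fun s hs' => by rw [lconv_comm]; exact hs s hs') (fun _ _ => rfl) ht]
    simp [lconv]
  have hd : ∀ t > (0:ℝ), HasDerivAt (lconv k f) (φ t) t := by
    intro t ht
    have h1 : HasDerivAt (fun u => ∫ x in (0:ℝ)..u, φ x) (φ t) t :=
      intervalIntegral.integral_hasDerivAt_right (hφ.intble ht)
        (hφ.contOn.stronglyMeasurableAtFilter isOpen_Ioi t ht)
        (hφ.contOn.continuousAt (Ioi_mem_nhds ht))
    refine h1.congr_of_eventuallyEq ?_
    filter_upwards [Ioi_mem_nhds ht] with s hs'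
    exact key s hs'
  refine ⟨hf, fun t ht => (hd t ht).differentiableAt, ⟨0, ?_⟩,
    hφ.congr fun t ht => (hd t ht).deriv⟩
  have hc := intervalIntegral.continuousOn_primitive_interval' (hφ.intble one_pos)
    (Set.left_mem_uIcc) 0 Set.left_mem_uIcc
  rw [Set.uIcc_of_le zero_le_one, ContinuousWithinAt, intervalIntegral.integral_same] at hc
  have hc2 := hc.mono_left (nhdsWithin_mono (0:ℝ) (Set.Ioc_subset_Icc_self))
  rw [nhdsWithin_Ioc_eq_nhdsGT zero_lt_one] at hc2
  refine hc2.congr' ?_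
  filter_upwards [self_mem_nhdsWithin] with s hs'
  exact (key s hs').symm
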